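/- Let k be a field, X a k-scheme, U ⊆ X an open subscheme, and m a natural number. Suppose the pair (X_m, u) represents the m-jet functor F_m^X, and let π_m : X_m → X be the associated projection. Then the open subscheme π_m^{-1}(U) of X_m, together with the restriction of u, represents F_m^U; equivalently, for every k-scheme Z, a morphism g : Z → X_m factors through π_m^{-1}(U) if and only if the corresponding morphism u ∘ (g × id) : Z ×_{Spec k} Spec(k[t]/(t^{m+1})) → X factors through U, and this gives bijections Hom_k(Z, π_m^{-1}(U)) ≅ Hom_k(Z ×_{Spec k} Spec(k[t]/(t^{m+1})), U), natural in Z. -/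

import Mathlib

open AlgebraicGeometry CategoryTheory Limits

noncomputable section

variable (k : Type) [Field k] (m : ℕ)

/-- The ring `k[t]/(t^{m+1})`. -/
abbrev JetRing : Type := Polynomial k ⧸ Ideal.span {(Polynomial.X : Polynomial k) ^ (m + 1)}

/-- `Spec k`. -/
abbrev Speck := Spec (CommRingCat.of k)

/-- `Spec (k[t]/(t^{m+1}))`. -/
abbrev JetSpec := Spec (CommRingCat.of (JetRing k m))

/-- The structure morphism `Spec (k[t]/(t^{m+1})) → Spec k`. -/
def jetStruct : JetSpec k m ⟶ Speck k :=
  Spec.map (CommRingCat.ofHom (algebraMap k (JetRing k m)))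

/-- Evaluation at `t = 0`, `k[t]/(t^{m+1}) → k`, as a `k`-algebra homomorphism. -/
def jetEvalAlgHom : JetRing k m →ₐ[k] k :=
  Ideal.Quotient.liftₐ _ ((Polynomial.aeval (0 : k)).restrictScalars k)
    (by
      intro p hp
      rw [Ideal.mem_span_singleton] at hp
      obtain ⟨q, rfl⟩ := hp
      simp)

/-- The `k`-point `t = 0` of `Spec (k[t]/(t^{m+1}))`. -/
def jetZero : Speck k ⟶ JetSpec k m :=
  Spec.map (CommRingCat.ofHom (jetEvalAlgHom k m).toRingHom)

lemma jetZero_jetStruct : jetZero k m ≫ jetStruct k m = 𝟙 (Speck k) := by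
  rw [jetZero, jetStruct, ← Spec.map_comp, ← Spec.map_id]
  congr 1
  ext c
  simpa using (jetEvalAlgHom k m).commutes c

end

open AlgebraicGeometry CategoryTheory Limits in
/-- The projection `π_m : X_m → X` associated to a representation `(X_m, u)` of the
`m`-jet functor. -/
noncomputable def jetProj {k : Type} [Field k] {m : ℕ} {X Xm : Scheme}
    (sXm : Xm ⟶ Speck k) (u : pullback sXm (jetStruct k m) ⟶ X) : Xm ⟶ X :=
  pullback.lift (𝟙 Xm) (sXm ≫ jetZero k m)
    (by rw [Category.id_comp, Category.assoc, jetZero_jetStruct, Category.comp_id]) ≫ u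

open AlgebraicGeometry CategoryTheory Limits in
/-- The zero section `Z → Z × Spec (k[t]/(t^{m+1}))`. -/
noncomputable def jetSec {k : Type} [Field k] (m : ℕ) {Z : Scheme} (sZ : Z ⟶ Speck k) :
    Z ⟶ pullback sZ (jetStruct k m) :=
  pullback.lift (𝟙 Z) (sZ ≫ jetZero k m)
    (by rw [Category.id_comp, Category.assoc, jetZero_jetStruct, Category.comp_id])

open AlgebraicGeometry CategoryTheory Limits in
lemma jetSec_fst {k : Type} [Field k] (m : ℕ) {Z : Scheme} (sZ : Z ⟶ Speck k) :
    jetSec m sZ ≫ pullback.fst sZ (jetStruct k m) = 𝟙 Z :=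
  pullback.lift_fst _ _ _

open AlgebraicGeometry CategoryTheory Limits in
lemma jetSec_snd {k : Type} [Field k] (m : ℕ) {Z : Scheme} (sZ : Z ⟶ Speck k) :
    jetSec m sZ ≫ pullback.snd sZ (jetStruct k m) = sZ ≫ jetZero k m :=
  pullback.lift_snd _ _ _

open AlgebraicGeometry CategoryTheory Limits in
lemma jetZero_surjective (k : Type) [Field k] (m : ℕ) : Surjective (jetZero k m) := by
  constructor
  intro (p : PrimeSpectrum (JetRing k m))
  have hs : Function.Surjective (jetEvalAlgHom k m).toRingHom := fun c =>
    ⟨algebraMap k _ c, (jetEvalAlgHom k m).commutes c⟩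
  have hr := _root_.range_comap_of_surjective _ (jetEvalAlgHom k m).toRingHom hs
  have : p ∈ Set.range (PrimeSpectrum.comap (jetEvalAlgHom k m).toRingHom) := by
    rw [hr, PrimeSpectrum.mem_zeroLocus]
    intro x hx
    obtain ⟨q, rfl⟩ := Ideal.Quotient.mk_surjective x
    have hq : Polynomial.aeval (0 : k) q = 0 := hx
    rw [Polynomial.aeval_def, Polynomial.eval₂_eq_eval_map] at hq
    have hd : (Polynomial.X : Polynomial k) ∣ q := by
      rw [Polynomial.X_dvd_iff, Polynomial.coeff_zero_eq_eval_zero]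
      simpa using hq
    obtain ⟨r, rfl⟩ := hd
    refine p.2.mem_of_pow_mem (m + 1) ?_
    have : (Ideal.Quotient.mk (Ideal.span {(Polynomial.X : Polynomial k) ^ (m + 1)}))
        (Polynomial.X * r) ^ (m + 1) = 0 := by
      rw [← map_pow, Ideal.Quotient.eq_zero_iff_mem, mul_pow]
      exact Ideal.mul_mem_right _ _ (Ideal.subset_span rfl)
    rw [this]
    exact p.asIdeal.zero_mem
  exact this

open AlgebraicGeometry CategoryTheory Limits in
lemma jetSec_surjective {k : Type} [Field k] (m : ℕ) {Z : Scheme} (sZ : Z ⟶ Speck k) :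
    Surjective (jetSec m sZ) := by
  have hp : IsPullback (jetSec m sZ) sZ (pullback.snd sZ (jetStruct k m)) (jetZero k m) := by
    refine IsPullback.of_right (h₁₂ := pullback.fst sZ (jetStruct k m)) (h₂₂ := jetStruct k m)
      (v₁₃ := sZ) ?_ (jetSec_snd m sZ) (IsPullback.of_hasPullback _ _)
    rw [jetSec_fst, jetZero_jetStruct]
    exact IsPullback.of_horiz_isIso ⟨by simp⟩
  exact MorphismProperty.of_isPullback (P := @Surjective) hp.flip (jetZero_surjective k m)

open AlgebraicGeometry CategoryTheory Limits in
lemma jetSec_map {k : Type} [Field k] (m : ℕ) {X Xm Z : Scheme} (sXm : Xm ⟶ Speck k)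
    (u : pullback sXm (jetStruct k m) ⟶ X) (sZ : Z ⟶ Speck k) (g : Z ⟶ Xm)
    (hg : g ≫ sXm = sZ) :
    jetSec m sZ ≫ pullback.map sZ (jetStruct k m) sXm (jetStruct k m) g
            (𝟙 (JetSpec k m)) (𝟙 (Speck k))
            (by rw [Category.comp_id, hg]) (by simp) ≫ u = g ≫ jetProj sXm u := by
  change _ = g ≫ jetSec m sXm ≫ u
  rw [← Category.assoc, ← Category.assoc]
  congr 1
  apply pullback.hom_ext
  · rw [Category.assoc, Category.assoc, jetSec_fst, Category.comp_id g]
    refine (congrArg (jetSec m sZ ≫ ·) (pullback.lift_fst _ _ _)).trans ?_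
    rw [← Category.assoc, jetSec_fst, Category.id_comp]
  · rw [Category.assoc, Category.assoc, jetSec_snd]
    refine (congrArg (jetSec m sZ ≫ ·) (pullback.lift_snd _ _ _)).trans ?_
    rw [Category.comp_id, jetSec_snd, ← Category.assoc, hg]

open AlgebraicGeometry CategoryTheory Limits in
lemma jet_range_iff {k : Type} [Field k] (m : ℕ) {X Xm Z : Scheme} (U : X.Opens)
    (sXm : Xm ⟶ Speck k)
    (u : pullback sXm (jetStruct k m) ⟶ X) (sZ : Z ⟶ Speck k) (g : Z ⟶ Xm)
    (hg : g ≫ sXm = sZ) :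
    Set.range g.base ⊆ (jetProj sXm u).base ⁻¹' (U : Set X) ↔
          Set.range (pullback.map sZ (jetStruct k m) sXm (jetStruct k m) g
            (𝟙 (JetSpec k m)) (𝟙 (Speck k))
            (by rw [Category.comp_id, hg]) (by simp) ≫ u).base ⊆ (U : Set X) := by
  have key := jetSec_map m sXm u sZ g hg
  have hs := (jetSec_surjective m sZ).surj
  generalize pullback.map sZ (jetStruct k m) sXm (jetStruct k m) g
            (𝟙 (JetSpec k m)) (𝟙 (Speck k))
            (by rw [Category.comp_id, hg]) (by simp) ≫ u = f at key ⊢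
  have hk : ∀ z : Z, f (jetSec m sZ z) = jetProj sXm u (g z) := fun z => by
    rw [← Scheme.Hom.comp_apply, key, Scheme.Hom.comp_apply]
  constructor
  · rintro h _ ⟨y, rfl⟩
    obtain ⟨z, rfl⟩ := hs y
    have := h ⟨z, rfl⟩
    change f (jetSec m sZ z) ∈ U
    rw [hk]
    exact this
  · rintro h _ ⟨z, rfl⟩
    change jetProj sXm u (g z) ∈ U
    rw [← hk]
    exact h ⟨_, rfl⟩

open AlgebraicGeometry CategoryTheory Limits in
/-- Let `(X_m, u)` represent the `m`-jet functor of a `k`-scheme `X`, with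
projection `π_m : X_m → X`, and let `U ⊆ X` be an open subscheme. Then (a) a `k`-morphism
`g : Z → X_m` factors through the open subscheme `π_m^{-1}(U)` if and only if
`u ∘ (g × id)` factors through `U`, and (b) `π_m^{-1}(U)` with the restriction of `u`
represents the `m`-jet functor of `U`: every `k`-morphism
`h : Z ×_{Spec k} Spec(k[t]/(t^{m+1})) → U` corresponds to a unique `k`-morphism
`Z → X_m` factoring through `π_m^{-1}(U)`. -/
theorem jet_scheme_of_open_subscheme (k : Type) [Field k] (m : ℕ)
    (X : Scheme) (sX : X ⟶ Speck k) (U : X.Opens)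
    (Xm : Scheme) (sXm : Xm ⟶ Speck k)
    (u : pullback sXm (jetStruct k m) ⟶ X)
    (hu : u ≫ sX = pullback.fst sXm (jetStruct k m) ≫ sXm)
    (rep : ∀ (Z : Scheme) (sZ : Z ⟶ Speck k) (h : pullback sZ (jetStruct k m) ⟶ X),
      h ≫ sX = pullback.fst sZ (jetStruct k m) ≫ sZ →
      ∃! g : { g : Z ⟶ Xm // g ≫ sXm = sZ },
        pullback.map sZ (jetStruct k m) sXm (jetStruct k m) g.1
          (𝟙 (JetSpec k m)) (𝟙 (Speck k))
          (by rw [Category.comp_id, g.2]) (by simp) ≫ u = h) :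
    (∀ (Z : Scheme) (sZ : Z ⟶ Speck k) (g : Z ⟶ Xm) (hg : g ≫ sXm = sZ),
        Set.range g.base ⊆ (jetProj sXm u).base ⁻¹' (U : Set X) ↔
          Set.range (pullback.map sZ (jetStruct k m) sXm (jetStruct k m) g
            (𝟙 (JetSpec k m)) (𝟙 (Speck k))
            (by rw [Category.comp_id, hg]) (by simp) ≫ u).base ⊆ (U : Set X)) ∧
      ∀ (Z : Scheme) (sZ : Z ⟶ Speck k) (h : pullback sZ (jetStruct k m) ⟶ U.toScheme),
        h ≫ U.ι ≫ sX = pullback.fst sZ (jetStruct k m) ≫ sZ →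
        ∃! g : { g : Z ⟶ Xm // g ≫ sXm = sZ ∧
            Set.range g.base ⊆ (jetProj sXm u).base ⁻¹' (U : Set X) },
          pullback.map sZ (jetStruct k m) sXm (jetStruct k m) g.1
            (𝟙 (JetSpec k m)) (𝟙 (Speck k))
            (by rw [Category.comp_id, g.2.1]) (by simp) ≫ u = h ≫ U.ι := by
  refine ⟨fun Z sZ g hg => jet_range_iff m U sXm u sZ g hg, fun Z sZ h hh => ?_⟩
  obtain ⟨g, hg, huniq⟩ := rep Z sZ (h ≫ U.ι) (by rw [Category.assoc, hh])
  refine ⟨⟨g.1, g.2, ?_⟩, hg, ?_⟩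
  · rw [jet_range_iff m U sXm u sZ g.1 g.2, hg]
    rintro _ ⟨y, rfl⟩
    exact (h y).2
  · rintro ⟨g', h1, h2⟩ h3
    have := huniq ⟨g', h1⟩ h3
    exact Subtype.ext (congrArg (fun x => x.1) this)
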